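/- Let Σ ⊂ ℝ^{n+1} be properly embedded in B_{r₀}(x₀), x₀ ∈ Σ, with |A|(x) ≤ 1/r₀ for x ∈ B_{r₀}(x₀) ∩ Σ. Assume x₀ = 0 and the tangent plane at x₀ is {x^{n+1} = 0}. Then there is a function u : {|x'| < r₀/96} → ℝ with u(0) = 0 and ∇u(0) = 0 such that the connected component of Σ ∩ {|x'| < r₀/96} containing x₀ is the graph {(x', u(x'))}, and |∇u|(x') ≤ 36|x'|/r₀. -/

import Mathlib

open Metric

/-- Append a last coordinate: `(y, a) ∈ ℝⁿ × ℝ ↦ ℝ^{n+1}`. -/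
noncomputable def snocE {n : ℕ} (y : EuclideanSpace ℝ (Fin n)) (a : ℝ) :
    EuclideanSpace ℝ (Fin (n + 1)) :=
  (WithLp.equiv 2 (Fin (n + 1) → ℝ)).symm (Fin.snoc ((WithLp.equiv 2 (Fin n → ℝ)) y) a)

/-- Drop the last coordinate: `ℝ^{n+1} → ℝⁿ`. -/
noncomputable def projE {n : ℕ} (z : EuclideanSpace ℝ (Fin (n + 1))) :
    EuclideanSpace ℝ (Fin n) :=
  (WithLp.equiv 2 (Fin n → ℝ)).symm
    (fun i => (WithLp.equiv 2 (Fin (n + 1) → ℝ)) z i.castSucc)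

/-- Near `p`, the set `S` coincides with the graph of `f` (in normal position: `f 0 = 0`,
`Df 0 = 0`) over the hyperplane obtained by rotating `{x_{n+1} = 0}` by the linear
isometry `e` and translating to `p`. -/
def IsGraphChartAt (n : ℕ) (S : Set (EuclideanSpace ℝ (Fin (n + 1))))
    (p : EuclideanSpace ℝ (Fin (n + 1)))
    (e : EuclideanSpace ℝ (Fin (n + 1)) ≃ₗᵢ[ℝ] EuclideanSpace ℝ (Fin (n + 1)))
    (r : ℝ) (f : EuclideanSpace ℝ (Fin n) → ℝ) : Prop :=
  0 < r ∧ f 0 = 0 ∧ fderiv ℝ f 0 = 0 ∧ ContDiffOn ℝ 2 f (ball 0 r) ∧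
    S ∩ ball p r =
      {z ∈ ball p r |
        ∃ y ∈ ball (0 : EuclideanSpace ℝ (Fin n)) r, z = p + e (snocE y (f y))}

/-!
Over the unit-slope part of `S`, the projection to `ℝⁿ` is a local homeomorphism, so the graph
through the origin is a section of it that can be continued radially. A level set `{Φ = 0}` with
`‖D²Φ‖ ≤ M ‖DΦ‖` that is the graph of `u` with `|∇u| ≤ 1` satisfies `‖DΦ‖ ≤ 2 |∂Φ/∂t|`, hence
`|D²u| ≤ 2M`, and `∇u(0) = 0` gives `|∇u| ≤ 2M|y|`. As long as `2M|y| < 1`, a limit of points of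
the graph is again a point near which `S` is a graph of slope less than one, so the continuation
does not stop.
-/

section LocalGraphLemma

open Filter Topology Set Function

section Sections

variable {X Y : Type*} [TopologicalSpace X] [TopologicalSpace Y] {π : X → Y} {s t : Y → X}
  {A B : Set Y} {x₀ : X} {y₀ : Y}

theorem isLocalHomeomorph_of_isOpenMap_of_isLocallyInjective (hc : Continuous π)
    (ho : IsOpenMap π) (hπ : IsLocallyInjective π) : IsLocalHomeomorph π :=
  isLocalHomeomorph_iff_isOpenEmbedding_restrict.2 fun x =>
    let ⟨U, hUo, hxU, hU⟩ := hπ x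
    ⟨U, hUo.mem_nhds hxU, .of_continuous_injective_isOpenMap (hc.comp continuous_subtype_val)
      hU.injective (ho.domRestrict hUo)⟩

/-- `s` is a continuous section of the map `π` over the set `A`. -/
structure IsSectionOn (π : X → Y) (s : Y → X) (A : Set Y) : Prop where
  continuousOn : ContinuousOn s A
  rightInvOn : RightInvOn s π A

theorem IsSectionOn.mono (hs : IsSectionOn π s A) (hBA : B ⊆ A) : IsSectionOn π s B :=
  ⟨hs.continuousOn.mono hBA, hs.rightInvOn.mono hBA⟩

theorem IsSectionOn.eqOn [T2Space X] (hs : IsSectionOn π s A) (ht : IsSectionOn π t A)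
    (hπ : IsLocallyInjective π) (hA : IsPreconnected A) (hy₀ : y₀ ∈ A) (hst : s y₀ = t y₀) :
    EqOn s t A :=
  (T2Space.isSeparatedMap π).eqOn_of_comp_eqOn hπ hA hs.continuousOn ht.continuousOn
    (fun _ hy => (hs.rightInvOn hy).trans (ht.rightInvOn hy).symm) hy₀ hst

theorem IsSectionOn.exists_isOpen_superset [T2Space Y] (hs : IsSectionOn π s A)
    (hπ : IsLocalHomeomorph π) (hA : IsCompact A) :
    ∃ U, IsOpen U ∧ A ⊆ U ∧ ∃ t, IsSectionOn π t U ∧ EqOn t s A := by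
  rcases A.eq_empty_or_nonempty with rfl | ⟨y₀, -⟩
  · exact ⟨∅, isOpen_empty, subset_rfl, s, hs, eqOn_empty _ _⟩
  have : Nonempty X := ⟨s y₀⟩
  have hinj : InjOn π (s '' A) := by
    rintro _ ⟨y, hy, rfl⟩ _ ⟨z, hz, rfl⟩ h
    rw [← hs.rightInvOn hy, h, hs.rightInvOn hz]
  obtain ⟨W, hWo, hsW, hW⟩ := hinj.exists_isOpen_superset
    (hA.image_of_continuousOn hs.continuousOn) (fun x _ => hπ.continuous.continuousAt) fun x _ =>
      let ⟨V, hVo, hxV, hV⟩ := hπ.isLocallyInjective x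
      ⟨V, hVo.mem_nhds hxV, hV⟩
  have hsA : ∀ y ∈ A, s y ∈ W := fun y hy => hsW (mem_image_of_mem s hy)
  refine ⟨π '' W, hπ.isOpenMap W hWo, fun y hy => ⟨s y, hsA y hy, hs.rightInvOn hy⟩,
    invFunOn π W, ⟨?_, (surjOn_image π W).rightInvOn_invFunOn⟩, fun y hy => ?_⟩
  · exact (hπ.isOpenMap.domRestrict hWo).continuousOn_image_of_leftInvOn hW.leftInvOn_invFunOn
  · conv_lhs => rw [← hs.rightInvOn hy]
    exact hW.leftInvOn_invFunOn (hsA y hy)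

theorem exists_isSectionOn_iUnion [T2Space X] {ι : Type*} [Nonempty ι] {U : ι → Set Y}
    (hπ : IsLocallyInjective π) (hUo : ∀ i, IsOpen (U i))
    (hUU : ∀ i j, IsPreconnected (U i ∩ U j)) (hy₀ : ∀ i, y₀ ∈ U i)
    (hs : ∀ i, ∃ s, IsSectionOn π s (U i) ∧ s y₀ = x₀) :
    ∃ s, IsSectionOn π s (⋃ i, U i) ∧ s y₀ = x₀ := by
  choose s hs hs₀ using hs
  have hcover : ∀ y ∈ ⋃ i, U i, ∃ i, y ∈ U i := fun y hy => mem_iUnion.1 hy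
  choose! i hi using hcover
  have hglue : ∀ j, EqOn (fun y => s (i y) y) (s j) (U j) := fun j y hy =>
    ((hs (i y)).mono inter_subset_left).eqOn ((hs j).mono inter_subset_right) hπ
      (hUU (i y) j) ⟨hy₀ (i y), hy₀ j⟩ ((hs₀ _).trans (hs₀ j).symm)
      ⟨hi y (mem_iUnion_of_mem j hy), hy⟩
  refine ⟨fun y => s (i y) y, ⟨.iUnion_of_isOpen ?_ hUo, fun y hy => ?_⟩, hs₀ _⟩
  · exact fun {j} => (hs j).continuousOn.congr (hglue j)
  · exact (hs _).rightInvOn (hi y hy)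

end Sections

section Continuation

variable {X E : Type*} [TopologicalSpace X] [T2Space X] [NormedAddCommGroup E] [NormedSpace ℝ E]
  {π : X → E} {x₀ : X} {R : ℝ}

theorem exists_isSectionOn_ball_of_forall_lt (hπ : IsLocallyInjective π) (hR : 0 < R)
    (h : ∀ ρ, 0 < ρ → ρ < R → ∃ s, IsSectionOn π s (ball 0 ρ) ∧ s 0 = x₀) :
    ∃ s, IsSectionOn π s (ball 0 R) ∧ s 0 = x₀ := by
  have hunion : ball (0 : E) R = ⋃ ρ : Ioo 0 R, ball 0 (ρ : ℝ) := by
    refine subset_antisymm (fun y hy => ?_) (iUnion_subset fun ρ => ball_subset_ball ρ.2.2.le)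
    obtain ⟨ρ, hyρ, hρR⟩ := exists_between (mem_ball_zero_iff.1 hy)
    exact mem_iUnion.2 ⟨⟨ρ, (norm_nonneg y).trans_lt hyρ, hρR⟩, mem_ball_zero_iff.2 hyρ⟩
  have : Nonempty (Ioo 0 R) := (nonempty_Ioo.2 hR).to_subtype
  rw [hunion]
  exact exists_isSectionOn_iUnion hπ (fun _ => isOpen_ball)
    (fun _ _ => ((convex_ball _ _).inter (convex_ball _ _)).isPreconnected)
    (fun ρ => mem_ball_self ρ.2.1) fun ρ => h ρ ρ.2.1 ρ.2.2

theorem exists_isSectionOn_ball_of_closedBall [ProperSpace E] (hπ : IsLocalHomeomorph π)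
    (hx₀ : π x₀ = 0) (hR : 0 < R)
    (hext : ∀ ρ, 0 < ρ → ρ < R → ∀ s, IsSectionOn π s (ball 0 ρ) → s 0 = x₀ →
      ∃ t, IsSectionOn π t (closedBall 0 ρ) ∧ t 0 = x₀) :
    ∃ s, IsSectionOn π s (ball 0 R) ∧ s 0 = x₀ := by
  set T : Set ℝ := {ρ | ∃ s, IsSectionOn π s (ball 0 ρ) ∧ s 0 = x₀}
  have hT : ∀ ρ ∈ T, ∀ σ ≤ ρ, σ ∈ T := fun ρ ⟨s, hs, hs₀⟩ σ hσ =>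
    ⟨s, hs.mono (ball_subset_ball hσ), hs₀⟩
  have h0T : (0 : ℝ) ∈ T := ⟨fun _ => x₀, by
    rw [ball_zero]; exact ⟨continuousOn_empty _, fun _ => False.elim⟩, rfl⟩
  have hclosed : IsClosed T := isClosed_of_closure_subset fun ρ hρ => by
    rcases le_or_gt ρ 0 with hρ0 | hρ0
    · exact hT 0 h0T ρ hρ0
    refine exists_isSectionOn_ball_of_forall_lt hπ.isLocallyInjective hρ0 fun σ _ hσρ => ?_
    obtain ⟨τ, hστ, hτ⟩ := mem_closure_iff.1 hρ (Ioi σ) isOpen_Ioi hσρ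
    exact hT τ hτ σ (mem_Ioi.1 hστ).le
  refine (hclosed.inter isClosed_Icc).mem_of_ge_of_forall_exists_gt h0T hR.le ?_
  rintro ρ ⟨⟨s, hs, hs₀⟩, hρ0, hρR⟩
  have hclosedBall : ∃ t, IsSectionOn π t (closedBall 0 ρ) ∧ t 0 = x₀ := by
    rcases hρ0.eq_or_lt with rfl | hρ0
    · refine ⟨fun _ => x₀, ⟨continuousOn_const, fun y hy => ?_⟩, rfl⟩
      rw [hx₀, norm_le_zero_iff.1 (mem_closedBall_zero_iff.1 hy)]
    · exact hext ρ hρ0 hρR s hs hs₀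
  obtain ⟨t, ht, ht₀⟩ := hclosedBall
  obtain ⟨U, hUo, hU, t', ht', htt'⟩ :=
    ht.exists_isOpen_superset hπ (isCompact_closedBall 0 ρ)
  obtain ⟨ε, hε, hεU⟩ := (isCompact_closedBall 0 ρ).exists_thickening_subset_open hUo hU
  rw [thickening_closedBall hε hρ0] at hεU
  have hmem : ε + ρ ∈ T :=
    ⟨t', ht'.mono hεU, (htt' (mem_closedBall_self hρ0)).trans ht₀⟩
  exact ⟨min (ε + ρ) R, hT _ hmem _ (min_le_left _ _),
    lt_min (lt_add_of_pos_left ρ hε) hρR, min_le_right _ _⟩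

end Continuation

section Component

variable {Y Z : Type*} [TopologicalSpace Y] [TopologicalSpace Z]

theorem connectedComponentIn_eq_image_graph [T2Space Z] {S : Set (Y × Z)} {U : Set Y} {u : Y → Z}
    {y₀ : Y} (hU : IsPreconnected U) (hy₀ : y₀ ∈ U) (hu : ContinuousOn u U)
    (hS : ∀ y ∈ U, ∀ᶠ p in 𝓝 (y, u y), p ∈ S ↔ p.2 = u p.1) :
    connectedComponentIn (S ∩ Prod.fst ⁻¹' U) (y₀, u y₀) = (fun y => (y, u y)) '' U := by
  set F := S ∩ Prod.fst ⁻¹' U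
  set Γ := (fun y => (y, u y)) '' U
  have hΓF : Γ ⊆ F := image_subset_iff.2 fun y hy => ⟨(hS y hy).self_of_nhds.2 rfl, hy⟩
  have hy₀Γ : (y₀, u y₀) ∈ Γ := mem_image_of_mem _ hy₀
  refine subset_antisymm ?_ <| IsPreconnected.subset_connectedComponentIn
    (hU.image _ (continuousOn_id.prodMk hu)) hy₀Γ hΓF
  have hΓ : ∀ p ∈ F, p ∈ Γ ↔ p.2 = u p.1 := by
    rintro ⟨y, z⟩ ⟨-, hy⟩
    exact ⟨by rintro ⟨_, -, ⟨⟩⟩; rfl, fun h : z = u y => ⟨y, hy, by rw [h]⟩⟩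
  have hclopen : IsClopen ((↑) ⁻¹' Γ : Set F) := by
    have hfst : MapsTo Prod.fst F U := fun p hp => hp.2
    have heq : ((↑) ⁻¹' Γ : Set F) = {p | p.1.2 = u p.1.1} := ext fun p => hΓ p p.2
    rw [heq]
    constructor
    · exact isClosed_eq (by fun_prop)
        (hu.comp_continuous (by fun_prop) fun p => hfst p.2)
    · refine isOpen_iff_mem_nhds.2 fun p (hp : p.1.2 = u p.1.1) => ?_
      have hSp := hS p.1.1 p.2.2
      rw [← hp] at hSp
      filter_upwards [continuousAt_subtype_val.eventually hSp] with q hq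
      exact hq.1 q.2.1
  rw [connectedComponentIn_eq_image (hΓF hy₀Γ)]
  exact image_subset_iff.2 (hclopen.connectedComponent_subset hy₀Γ)

end Component

section LevelSets

variable {E F G : Type*} [NormedAddCommGroup E] [NormedSpace ℝ E] [NormedAddCommGroup F]
  [NormedSpace ℝ F] [NormedAddCommGroup G] [NormedSpace ℝ G] {Φ : E × F → G} {u : E → F} {y : E}

theorem fderiv_apply_graph_eq_zero (hΦ : DifferentiableAt ℝ Φ (y, u y))
    (hu : DifferentiableAt ℝ u y) (h : ∀ᶠ x in 𝓝 y, Φ (x, u x) = 0) (k : E) :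
    fderiv ℝ Φ (y, u y) (k, fderiv ℝ u y k) = 0 := by
  have hcomp : HasFDerivAt (fun x => Φ (x, u x))
      (fderiv ℝ Φ (y, u y) ∘L (ContinuousLinearMap.id ℝ E).prod (fderiv ℝ u y)) y :=
    hΦ.hasFDerivAt.comp y ((hasFDerivAt_id y).prodMk hu.hasFDerivAt)
  have hzero : HasFDerivAt (fun x => Φ (x, u x)) (0 : E →L[ℝ] G) y :=
    (hasFDerivAt_const 0 y).congr_of_eventuallyEq h
  exact DFunLike.congr_fun (hcomp.unique hzero) k

theorem fderiv_fderiv_apply_graph_eq_zero (hΦ : ContDiffAt ℝ 2 Φ (y, u y))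
    (hu : ContDiffAt ℝ 2 u y) (h : ∀ᶠ x in 𝓝 y, Φ (x, u x) = 0) (l k : E) :
    fderiv ℝ (fderiv ℝ Φ) (y, u y) (l, fderiv ℝ u y l) (k, fderiv ℝ u y k) +
      fderiv ℝ Φ (y, u y) (0, fderiv ℝ (fderiv ℝ u) y l k) = 0 := by
  have hgraph : ContinuousAt (fun x => (x, u x)) y := continuousAt_id.prodMk hu.continuousAt
  have hfirst : ∀ᶠ x in 𝓝 y, fderiv ℝ Φ (x, u x) (k, fderiv ℝ u x k) = 0 := by
    filter_upwards [h.eventually_nhds, hu.eventually (by simp),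
      hgraph.eventually (hΦ.eventually (by simp))] with x hx hux hΦx
    exact fderiv_apply_graph_eq_zero (hΦx.differentiableAt (by simp))
      (hux.differentiableAt (by simp)) hx k
  have hDu : HasFDerivAt (fderiv ℝ u) (fderiv ℝ (fderiv ℝ u) y) y :=
    ((hu.fderiv_right (m := 1) le_rfl).differentiableAt (by simp)).hasFDerivAt
  have hDΦ : HasFDerivAt (fderiv ℝ Φ) (fderiv ℝ (fderiv ℝ Φ) (y, u y)) (y, u y) :=
    ((hΦ.fderiv_right (m := 1) le_rfl).differentiableAt (by simp)).hasFDerivAt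
  have hDΦu := hDΦ.comp y
    ((hasFDerivAt_id y).prodMk (hu.differentiableAt (by simp)).hasFDerivAt)
  have hsecond := hDΦu.clm_apply
    ((hasFDerivAt_const k y).prodMk (hDu.clm_apply (hasFDerivAt_const k y)))
  have hzero := hsecond.unique
    ((hasFDerivAt_const (0 : G) y).congr_of_eventuallyEq hfirst)
  simpa [add_comm] using DFunLike.congr_fun hzero l

theorem norm_le_two_mul_abs_of_apply_graph_eq_zero {L : E × ℝ →L[ℝ] ℝ} {D : E →L[ℝ] ℝ}
    (hD : ‖D‖ ≤ 1) (hLD : ∀ k, L (k, D k) = 0) : ‖L‖ ≤ 2 * |L (0, 1)| := by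
  refine L.opNorm_le_bound (by positivity) fun ⟨k, t⟩ => ?_
  have hdecomp : (k, t) = (k, D k) + (t - D k) • ((0, 1) : E × ℝ) := by simp
  have ht : |t - D k| ≤ 2 * ‖(k, t)‖ := calc
    |t - D k| ≤ |t| + |D k| := abs_sub _ _
    _ ≤ ‖(k, t)‖ + ‖k‖ :=
        add_le_add (norm_snd_le (k, t)) (D.le_of_opNorm_le hD k |>.trans_eq (one_mul _))
    _ ≤ 2 * ‖(k, t)‖ := by linarith [norm_fst_le (k, t)]
  rw [hdecomp, map_add, hLD, zero_add, map_smul, smul_eq_mul, ← hdecomp, norm_mul,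
    Real.norm_eq_abs, Real.norm_eq_abs]
  nlinarith [abs_nonneg (L (0, 1))]

end LevelSets

section LocalGraphs

variable {E : Type*} [NormedAddCommGroup E] [NormedSpace ℝ E] {S : Set (E × ℝ)} {u v w : E → ℝ}
  {q : E × ℝ} {y : E} {M : ℝ} {Φ : E × ℝ → ℝ}

/-- Near `q`, the set `S` is the regular level set `{Φ = 0}`. The bound `‖D²Φ‖ ≤ M ‖DΦ‖` at `q`
does not change when `Φ` is rescaled, and stands for the bound `M` on the second fundamental
form. -/
structure IsLevelSetAt {V : Type*} [NormedAddCommGroup V] [NormedSpace ℝ V] (S : Set V) (M : ℝ)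
    (q : V) (Φ : V → ℝ) : Prop where
  contDiffAt : ContDiffAt ℝ 2 Φ q
  fderiv_ne_zero : fderiv ℝ Φ q ≠ 0
  norm_fderiv_fderiv_le : ‖fderiv ℝ (fderiv ℝ Φ) q‖ ≤ M * ‖fderiv ℝ Φ q‖
  eventually_mem_iff : ∀ᶠ p in 𝓝 q, p ∈ S ↔ Φ p = 0

theorem IsLevelSetAt.nonneg {V : Type*} [NormedAddCommGroup V] [NormedSpace ℝ V] {S : Set V}
    {q : V} {Φ : V → ℝ} (hΦ : IsLevelSetAt S M q Φ) : 0 ≤ M :=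
  nonneg_of_mul_nonneg_left ((norm_nonneg (fderiv ℝ (fderiv ℝ Φ) q)).trans hΦ.norm_fderiv_fderiv_le)
    (norm_pos_iff.2 hΦ.fderiv_ne_zero)

/-- Near `q`, the set `S` is the graph of the function `v`, which is `C²` at `q.1`. -/
structure IsLocalGraphAt (S : Set (E × ℝ)) (v : E → ℝ) (q : E × ℝ) : Prop where
  contDiffAt : ContDiffAt ℝ 2 v q.1
  apply_eq : v q.1 = q.2
  eventually_mem_iff : ∀ᶠ p in 𝓝 q, p ∈ S ↔ p.2 = v p.1

theorem IsLocalGraphAt.tendsto (h : IsLocalGraphAt S v q) :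
    Tendsto (fun y => (y, v y)) (𝓝 q.1) (𝓝 q) := by
  have := continuousAt_id.prodMk h.contDiffAt.continuousAt
  rwa [ContinuousAt, h.apply_eq] at this

theorem IsLocalGraphAt.mem (h : IsLocalGraphAt S v q) : q ∈ S :=
  h.eventually_mem_iff.self_of_nhds.2 h.apply_eq.symm

theorem IsLocalGraphAt.eventually (h : IsLocalGraphAt S v q) :
    ∀ᶠ y in 𝓝 q.1, IsLocalGraphAt S v (y, v y) := by
  filter_upwards [h.contDiffAt.eventually (by simp),
    h.tendsto.eventually h.eventually_mem_iff.eventually_nhds] with y hy hyS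
  exact ⟨hy, rfl, hyS⟩

theorem IsLocalGraphAt.eventuallyEq {l : Filter E} (h : IsLocalGraphAt S v q)
    (hl : l ≤ 𝓝 q.1) (hw : Tendsto w l (𝓝 q.2)) (hwS : ∀ᶠ y in l, (y, w y) ∈ S) : w =ᶠ[l] v := by
  have hgraph : Tendsto (fun y => (y, w y)) l (𝓝 q) := (tendsto_id.mono_right hl).prodMk_nhds hw
  filter_upwards [hwS, hgraph.eventually h.eventually_mem_iff] with y hy hyS using hyS.1 hy

theorem IsLocalGraphAt.congr (h : IsLocalGraphAt S v q) (hu : u =ᶠ[𝓝 q.1] v) :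
    IsLocalGraphAt S u q where
  contDiffAt := h.contDiffAt.congr_of_eventuallyEq hu
  apply_eq := hu.self_of_nhds.trans h.apply_eq
  eventually_mem_iff := by
    filter_upwards [h.eventually_mem_iff, continuousAt_fst.eventually hu] with p hp hup
    rw [hp, hup]

theorem IsLevelSetAt.exists_isLocalGraphAt [CompleteSpace E] (hΦ : IsLevelSetAt S M q Φ)
    (hq : q ∈ S) (hvert : fderiv ℝ Φ q (0, 1) ≠ 0) : ∃ v, IsLocalGraphAt S v q := by
  have hinv : (fderiv ℝ Φ q ∘L .inr ℝ E ℝ).IsInvertible :=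
    ⟨.unitsEquivAut ℝ (.mk0 _ hvert), by ext; simp⟩
  refine ⟨hΦ.contDiffAt.implicitFunction (by simp) hinv,
    hΦ.contDiffAt.contDiffAt_implicitFunction _ _,
    hΦ.contDiffAt.implicitFunction_apply_self _ _, ?_⟩
  filter_upwards [hΦ.eventually_mem_iff,
    hΦ.contDiffAt.eventually_apply_eq_iff_implicitFunction (by simp) hinv] with p hpS hp
  rw [hpS, ← hΦ.eventually_mem_iff.self_of_nhds.1 hq, hp, eq_comm]

theorem IsLocalGraphAt.eventually_apply_eq_zero (h : IsLocalGraphAt S u q)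
    (hΦ : ∀ᶠ p in 𝓝 q, p ∈ S ↔ Φ p = 0) : ∀ᶠ y in 𝓝 q.1, Φ (y, u y) = 0 := by
  filter_upwards [h.tendsto.eventually h.eventually_mem_iff, h.tendsto.eventually hΦ] with y hyu hyΦ
  exact hyΦ.1 (hyu.2 rfl)

theorem IsLevelSetAt.norm_fderiv_fderiv_graph_le (hΦ : IsLevelSetAt S M (y, u y) Φ)
    (hu : IsLocalGraphAt S u (y, u y)) (hDu : ‖fderiv ℝ u y‖ ≤ 1) :
    ‖fderiv ℝ (fderiv ℝ u) y‖ ≤ 2 * M := by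
  have hzero := hu.eventually_apply_eq_zero hΦ.eventually_mem_iff
  set L := fderiv ℝ Φ (y, u y)
  set B := fderiv ℝ (fderiv ℝ Φ) (y, u y)
  have hvert : ‖L‖ ≤ 2 * |L (0, 1)| := norm_le_two_mul_abs_of_apply_graph_eq_zero hDu
    (fderiv_apply_graph_eq_zero (hΦ.contDiffAt.differentiableAt (by simp))
      (hu.contDiffAt.differentiableAt (by simp)) hzero)
  have hc : 0 < |L (0, 1)| := by linarith [norm_pos_iff.2 hΦ.fderiv_ne_zero]
  have hgraph : ∀ k, ‖(k, fderiv ℝ u y k)‖ ≤ ‖k‖ := fun k =>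
    max_le le_rfl ((fderiv ℝ u y).le_of_opNorm_le hDu k |>.trans_eq (one_mul _))
  have hM : 0 ≤ M := hΦ.nonneg
  refine ContinuousLinearMap.opNorm_le_bound₂ _ (by positivity) fun l k => ?_
  have hsecond := fderiv_fderiv_apply_graph_eq_zero hΦ.contDiffAt hu.contDiffAt hzero l k
  set t := fderiv ℝ (fderiv ℝ u) y l k
  have hLt : L (0, t) = t * L (0, 1) := by simpa using L.map_smul t (0, 1)
  refine le_of_mul_le_mul_right ?_ hc
  calc ‖t‖ * |L (0, 1)| = ‖B (l, fderiv ℝ u y l) (k, fderiv ℝ u y k)‖ := by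
        rw [← Real.norm_eq_abs, ← norm_mul, ← hLt, eq_neg_of_add_eq_zero_right hsecond, norm_neg]
    _ ≤ ‖B‖ * ‖(l, fderiv ℝ u y l)‖ * ‖(k, fderiv ℝ u y k)‖ := B.le_opNorm₂ _ _
    _ ≤ M * (2 * |L (0, 1)|) * ‖l‖ * ‖k‖ := by
        gcongr
        · exact hΦ.norm_fderiv_fderiv_le.trans (mul_le_mul_of_nonneg_left hvert hM)
        · exact hgraph l
        · exact hgraph k
    _ = 2 * M * ‖l‖ * ‖k‖ * |L (0, 1)| := by ring

end LocalGraphs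

section GentlePart

variable {E : Type*} [NormedAddCommGroup E] [NormedSpace ℝ E] {S : Set (E × ℝ)} {u v : E → ℝ}
  {q : E × ℝ} {A : Set E} {R : ℝ}

/-- The points near which `S` is a graph of slope less than one. -/
def gentlePart (S : Set (E × ℝ)) : Set (E × ℝ) :=
  {q | ∃ v, IsLocalGraphAt S v q ∧ ‖fderiv ℝ v q.1‖ < 1}

theorem gentlePart_subset : gentlePart S ⊆ S := fun _ ⟨_, hv, _⟩ => hv.mem

theorem IsLocalGraphAt.eventually_mem_gentlePart (h : IsLocalGraphAt S v q)
    (hv : ‖fderiv ℝ v q.1‖ < 1) : ∀ᶠ y in 𝓝 q.1, (y, v y) ∈ gentlePart S := by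
  have hDv : ContinuousAt (fderiv ℝ v) q.1 :=
    (h.contDiffAt.fderiv_right (m := 1) le_rfl).continuousAt
  filter_upwards [h.eventually, hDv.norm.eventually (gt_mem_nhds hv)] with y hy hvy
  exact ⟨v, hy, hvy⟩

theorem isLocalHomeomorph_fst_gentlePart :
    IsLocalHomeomorph fun q : gentlePart S => (q : E × ℝ).1 := by
  refine isLocalHomeomorph_of_isOpenMap_of_isLocallyInjective (by fun_prop)
    (.of_nhds_le fun q N hN => ?_) (isLocallyInjective_iff_nhds.2 fun q => ?_)
  · obtain ⟨v, hv, hDv⟩ := q.2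
    obtain ⟨N', hN', hNN'⟩ := mem_nhds_subtype _ _ _ |>.1 hN
    filter_upwards [hv.eventually_mem_gentlePart hDv, hv.tendsto.eventually hN'] with y hy hyN'
    exact hNN' (a := ⟨(y, v y), hy⟩) hyN'
  · obtain ⟨v, hv, -⟩ := q.2
    refine ⟨_, continuousAt_subtype_val.eventually hv.eventually_mem_iff, fun a ha b hb hab => ?_⟩
    refine Subtype.ext (Prod.ext hab ?_)
    rw [ha.1 (gentlePart_subset a.2), hb.1 (gentlePart_subset b.2)]
    exact congrArg v hab

/-- The graph of `u` over `A` is a sheet of `S` of slope less than one. -/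
def IsGentleGraphOn (S : Set (E × ℝ)) (u : E → ℝ) (A : Set E) : Prop :=
  ∀ y ∈ A, IsLocalGraphAt S u (y, u y) ∧ ‖fderiv ℝ u y‖ < 1

theorem isGentleGraphOn_of_mem_gentlePart (hA : IsOpen A) (hu : ContinuousOn u A)
    (hmem : ∀ y ∈ A, (y, u y) ∈ gentlePart S) : IsGentleGraphOn S u A := by
  intro y hy
  obtain ⟨v, hv, hDv⟩ := hmem y hy
  have huv : u =ᶠ[𝓝 y] v := hv.eventuallyEq le_rfl (hu.continuousAt (hA.mem_nhds hy)) <|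
    (hA.eventually_mem hy).mono fun x hx => gentlePart_subset (hmem x hx)
  exact ⟨hv.congr huv, by rwa [huv.fderiv_eq]⟩

theorem IsSectionOn.isGentleGraphOn {s : E → gentlePart S} (hA : IsOpen A)
    (hs : IsSectionOn (fun q : gentlePart S => (q : E × ℝ).1) s A) :
    IsGentleGraphOn S (fun y => (s y : E × ℝ).2) A := by
  refine isGentleGraphOn_of_mem_gentlePart hA ?_ fun y hy => ?_
  · exact (continuous_snd.comp continuous_subtype_val).comp_continuousOn hs.continuousOn
  · convert (s y).2 using 1
    exact Prod.ext (hs.rightInvOn hy).symm rfl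

theorem exists_isSectionOn_gentlePart {g : E → ℝ} (x₀ : gentlePart S) (hg : ContinuousOn g A)
    (hmem : ∀ y ∈ A, (y, g y) ∈ gentlePart S) :
    ∃ s, IsSectionOn (fun q : gentlePart S => (q : E × ℝ).1) s A ∧
      ∀ y ∈ A, (s y : E × ℝ) = (y, g y) := by
  classical
  set s : E → gentlePart S := fun y => if h : (y, g y) ∈ gentlePart S then ⟨_, h⟩ else x₀
  have hs : ∀ y ∈ A, (s y : E × ℝ) = (y, g y) := fun y hy => by simp [s, hmem y hy]
  refine ⟨s, ⟨?_, fun y hy => congrArg Prod.fst (hs y hy)⟩, hs⟩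
  exact IsInducing.subtypeVal.continuousOn_iff.2 ((continuousOn_id.prodMk hg).congr hs)

theorem exists_isGentleGraphOn_ball [ProperSpace E] (h₀ : (0, 0) ∈ gentlePart S) (hR : 0 < R)
    (hext : ∀ ρ, 0 < ρ → ρ < R → ∀ u, u 0 = 0 → IsGentleGraphOn S u (ball 0 ρ) →
      ∃ g, g 0 = 0 ∧ ContinuousOn g (closedBall 0 ρ) ∧
        ∀ y ∈ closedBall 0 ρ, (y, g y) ∈ gentlePart S) :
    ∃ u, u 0 = 0 ∧ IsGentleGraphOn S u (ball 0 R) := by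
  obtain ⟨s, hs, hs₀⟩ := exists_isSectionOn_ball_of_closedBall (x₀ := ⟨(0, 0), h₀⟩)
    isLocalHomeomorph_fst_gentlePart rfl hR fun ρ hρ hρR s hs hs₀ => by
      obtain ⟨g, hg₀, hg, hmem⟩ := hext ρ hρ hρR _ (by simp [hs₀]) (hs.isGentleGraphOn isOpen_ball)
      obtain ⟨t, ht, htg⟩ := exists_isSectionOn_gentlePart ⟨(0, 0), h₀⟩ hg hmem
      exact ⟨t, ht, Subtype.ext <| by rw [htg 0 (mem_closedBall_self hρ.le), hg₀]⟩
  exact ⟨_, by simp [hs₀], hs.isGentleGraphOn isOpen_ball⟩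

end GentlePart

section GradientEstimate

variable {E : Type*} [NormedAddCommGroup E] [NormedSpace ℝ E] {S : Set (E × ℝ)} {u v : E → ℝ}
  {A : Set E} {y : E} {q : E × ℝ} {M κ r R ρ : ℝ} {Φ : E × ℝ → ℝ}

theorem IsGentleGraphOn.abs_sub_le (hu : IsGentleGraphOn S u A) (hA : Convex ℝ A) {x : E}
    (hx : x ∈ A) (hy : y ∈ A) : |u y - u x| ≤ ‖y - x‖ := by
  simpa using hA.norm_image_sub_le_of_norm_fderiv_le (𝕜 := ℝ) (C := 1)
    (fun z hz => (hu z hz).1.contDiffAt.differentiableAt (by simp))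
    (fun z hz => (hu z hz).2.le) hx hy

theorem IsGentleGraphOn.mem_ball (hu : IsGentleGraphOn S u (ball 0 ρ)) (hu₀ : u 0 = 0)
    (hρ : ρ ≤ r) (hy : y ∈ ball 0 ρ) : (y, u y) ∈ S ∩ ball 0 r := by
  have hyρ := mem_ball_zero_iff.1 hy
  have huy : |u y| ≤ ‖y‖ := by
    simpa [hu₀] using hu.abs_sub_le (convex_ball 0 ρ) (mem_ball_self (pos_of_mem_ball hy)) hy
  exact ⟨(hu y hy).1.mem, mem_ball_zero_iff.2 <|
    max_lt (hyρ.trans_le hρ) (huy.trans_lt (hyρ.trans_le hρ))⟩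

theorem IsGentleGraphOn.norm_fderiv_le (hS : ∀ q ∈ S ∩ ball 0 r, ∃ Φ, IsLevelSetAt S M q Φ)
    (hu : IsGentleGraphOn S u (ball 0 ρ)) (hu₀ : u 0 = 0) (hDu₀ : fderiv ℝ u 0 = 0) (hρ : ρ ≤ r)
    (hy : y ∈ ball 0 ρ) : ‖fderiv ℝ u y‖ ≤ 2 * M * ‖y‖ := by
  simpa [hDu₀] using (convex_ball (0 : E) ρ).norm_image_sub_le_of_norm_fderiv_le (𝕜 := ℝ)
    (fun z hz => ((hu z hz).1.contDiffAt.fderiv_right (m := 1) le_rfl).differentiableAt (by simp))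
    (fun z hz =>
      let ⟨Φ, hΦ⟩ := hS _ (hu.mem_ball hu₀ hρ hz)
      hΦ.norm_fderiv_fderiv_graph_le (hu z hz).1 (hu z hz).2.le)
    (mem_ball_self (pos_of_mem_ball hy)) hy

-- A vertical tangent plane at the limit is excluded because `‖DΦ‖ ≤ 2 |∂Φ/∂t|` along the graph.
theorem IsGentleGraphOn.exists_isLocalGraphAt_of_tendsto [CompleteSpace E]
    (hu : IsGentleGraphOn S u A) (hA : IsOpen A) (hq : q ∈ S) (hqA : q.1 ∈ closure A)
    (hlim : Tendsto u (𝓝[A] q.1) (𝓝 q.2)) (hΦ : IsLevelSetAt S M q Φ)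
    (hκ : ∀ y ∈ A, ‖fderiv ℝ u y‖ ≤ κ) :
    ∃ v, IsLocalGraphAt S v q ∧ ‖fderiv ℝ v q.1‖ ≤ κ := by
  have : (𝓝[A] q.1).NeBot := mem_closure_iff_nhdsWithin_neBot.1 hqA
  have hle : 𝓝[A] q.1 ≤ 𝓝 q.1 := nhdsWithin_le_nhds
  have hgraph : Tendsto (fun y => (y, u y)) (𝓝[A] q.1) (𝓝 q) :=
    (tendsto_id.mono_right hle).prodMk_nhds hlim
  have hslant : ∀ᶠ y in 𝓝[A] q.1, ‖fderiv ℝ Φ (y, u y)‖ ≤ 2 * |fderiv ℝ Φ (y, u y) (0, 1)| := by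
    filter_upwards [self_mem_nhdsWithin, hgraph.eventually hΦ.eventually_mem_iff.eventually_nhds,
      hgraph.eventually (hΦ.contDiffAt.eventually (by simp))] with y hy hyS hyΦ
    exact norm_le_two_mul_abs_of_apply_graph_eq_zero (hu y hy).2.le
      (fderiv_apply_graph_eq_zero (hyΦ.differentiableAt (by simp))
        ((hu y hy).1.contDiffAt.differentiableAt (by simp))
        ((hu y hy).1.eventually_apply_eq_zero hyS))
  have hDΦ : Tendsto (fun y => fderiv ℝ Φ (y, u y)) (𝓝[A] q.1) (𝓝 (fderiv ℝ Φ q)) :=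
    (hΦ.contDiffAt.fderiv_right (m := 1) le_rfl).continuousAt.tendsto.comp hgraph
  have hslope : Tendsto (fun y => fderiv ℝ Φ (y, u y) (0, 1)) (𝓝[A] q.1)
      (𝓝 (fderiv ℝ Φ q (0, 1))) :=
    ((ContinuousLinearMap.apply ℝ ℝ ((0, 1) : E × ℝ)).continuous.tendsto _).comp hDΦ
  have hvert : ‖fderiv ℝ Φ q‖ ≤ 2 * |fderiv ℝ Φ q (0, 1)| :=
    le_of_tendsto_of_tendsto hDΦ.norm (hslope.abs.const_mul 2) hslant
  obtain ⟨v, hv⟩ := hΦ.exists_isLocalGraphAt hq fun h => hΦ.fderiv_ne_zero <| by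
    simpa [h] using hvert
  have huv : u =ᶠ[𝓝[A] q.1] v := hv.eventuallyEq hle hlim <|
    eventually_mem_nhdsWithin.mono fun y hy => (hu y hy).1.mem
  have hDv : ∀ᶠ y in 𝓝[A] q.1, ‖fderiv ℝ v y‖ ≤ κ := by
    filter_upwards [eventually_eventually_nhdsWithin.2 huv, self_mem_nhdsWithin] with y hy hyA
    rw [hA.nhdsWithin_eq hyA] at hy
    rw [← EventuallyEq.fderiv_eq hy]
    exact hκ y hyA
  have hcont : ContinuousAt (fderiv ℝ v) q.1 :=
    (hv.contDiffAt.fderiv_right (m := 1) le_rfl).continuousAt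
  exact ⟨v, hv, le_of_tendsto (hcont.tendsto.mono_left hle).norm hDv⟩

theorem IsGentleGraphOn.exists_closedBall [CompleteSpace E]
    (hS : ∀ q ∈ S ∩ ball 0 r, ∃ Φ, IsLevelSetAt S M q Φ) (hclosed : closure S ∩ ball 0 r ⊆ S)
    (hu : IsGentleGraphOn S u (ball 0 ρ)) (hu₀ : u 0 = 0) (hDu₀ : fderiv ℝ u 0 = 0) (hρ₀ : 0 < ρ)
    (hρ : ρ < r) (hM : 2 * M * ρ < 1) :
    ∃ g, g 0 = 0 ∧ ContinuousOn g (closedBall 0 ρ) ∧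
      ∀ y ∈ closedBall 0 ρ, (y, g y) ∈ gentlePart S := by
  have hlip : LipschitzOnWith 1 u (ball 0 ρ) := LipschitzOnWith.of_dist_le_mul fun x hx y hy => by
    simpa [Real.dist_eq, dist_eq_norm] using hu.abs_sub_le (convex_ball 0 ρ) hy hx
  obtain ⟨g, hg, hgu⟩ := hlip.extend_real
  have hgc : Continuous g := hg.continuous
  have hg₀ : g 0 = 0 := (hgu (mem_ball_self hρ₀)).symm.trans hu₀
  refine ⟨g, hg₀, hgc.continuousOn, fun y hy => ?_⟩
  have hyA : y ∈ closure (ball 0 ρ) := by rwa [closure_ball _ hρ₀.ne']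
  have hgS : (y, g y) ∈ closure S :=
    map_mem_closure (f := fun x => (x, g x)) (by fun_prop) hyA fun x hx => by
      simpa only [← hgu hx] using (hu x hx).1.mem
  have hgr : (y, g y) ∈ ball 0 r := by
    have hyρ := mem_closedBall_zero_iff.1 hy
    have hgy : |g y| ≤ ‖y‖ := by simpa [Real.dist_eq, hg₀] using hg.dist_le_mul y 0
    exact mem_ball_zero_iff.2 (max_lt (hyρ.trans_lt hρ) ((hgy.trans hyρ).trans_lt hρ))
  have hmem : (y, g y) ∈ S := hclosed ⟨hgS, hgr⟩
  have hlim : Tendsto u (𝓝[ball 0 ρ] y) (𝓝 (g y)) :=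
    (hgc.continuousAt.mono_left nhdsWithin_le_nhds).congr' <|
      eventually_mem_nhdsWithin.mono fun x hx => (hgu hx).symm
  obtain ⟨Φ, hΦ⟩ := hS _ ⟨hmem, hgr⟩
  obtain ⟨v, hv, hDv⟩ := hu.exists_isLocalGraphAt_of_tendsto isOpen_ball hmem hyA hlim hΦ
    (κ := 2 * M * ρ) fun x hx => (hu.norm_fderiv_le hS hu₀ hDu₀ hρ.le hx).trans <|
      mul_le_mul_of_nonneg_left (mem_ball_zero_iff.1 hx).le (mul_nonneg zero_le_two hΦ.nonneg)
  exact ⟨v, hv, hDv.trans_lt hM⟩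

theorem exists_isGentleGraphOn_of_isLevelSetAt [ProperSpace E]
    (hS : ∀ q ∈ S ∩ ball 0 r, ∃ Φ, IsLevelSetAt S M q Φ) (hclosed : closure S ∩ ball 0 r ⊆ S)
    (hv : IsLocalGraphAt S v (0, 0)) (hDv : fderiv ℝ v 0 = 0)
    (hR : 0 < R) (hRr : R ≤ r) (hM : 2 * M * R ≤ 1) :
    ∃ u, u 0 = 0 ∧ fderiv ℝ u 0 = 0 ∧ IsGentleGraphOn S u (ball 0 R) ∧
      ∀ y ∈ ball 0 R, ‖fderiv ℝ u y‖ ≤ 2 * M * ‖y‖ := by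
  obtain ⟨Φ, hΦ⟩ := hS _ ⟨hv.mem, mem_ball_self (hR.trans_le hRr)⟩
  have hzero : ∀ u ρ, 0 < ρ → u 0 = 0 → IsGentleGraphOn S u (ball 0 ρ) → fderiv ℝ u 0 = 0 := by
    intro u ρ hρ hu₀ hu
    have hu0 := (hu 0 (mem_ball_self hρ)).1
    have huv : u =ᶠ[𝓝 0] v := hv.eventuallyEq le_rfl
      (by simpa [hu₀] using hu0.contDiffAt.continuousAt.tendsto)
      (hu0.eventually.mono fun _ h => h.mem)
    rw [huv.fderiv_eq, hDv]
  obtain ⟨u, hu₀, hu⟩ := exists_isGentleGraphOn_ball ⟨v, hv, by simp [hDv]⟩ hR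
    fun ρ hρ hρR u hu₀ hu => hu.exists_closedBall hS hclosed hu₀ (hzero u ρ hρ hu₀ hu) hρ
      (hρR.trans_le hRr) (by nlinarith [hΦ.nonneg])
  have hDu₀ := hzero u R hR hu₀ hu
  exact ⟨u, hu₀, hDu₀, hu, fun y hy => hu.norm_fderiv_le hS hu₀ hDu₀ hRr hy⟩

end GradientEstimate

section Precomposition

variable {V W E : Type*} [NormedAddCommGroup V] [NormedSpace ℝ V] [NormedAddCommGroup W]
  [NormedSpace ℝ W] [NormedAddCommGroup E] [NormedSpace ℝ E] {S : Set W} {M : ℝ}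

theorem norm_fderiv_fderiv_comp_continuousLinearMap_le {g : W → ℝ} {x : V} (L : V →L[ℝ] W)
    (hg : ContDiffAt ℝ 2 g (L x)) :
    ‖fderiv ℝ (fderiv ℝ (g ∘ L)) x‖ ≤ ‖fderiv ℝ (fderiv ℝ g) (L x)‖ * ‖L‖ ^ 2 := by
  have hfirst : fderiv ℝ (g ∘ L) =ᶠ[𝓝 x] fun z => (fderiv ℝ g (L z)).comp L := by
    filter_upwards [L.continuous.continuousAt.eventually (hg.eventually (by simp))] with z hz
    exact ((hz.differentiableAt (by simp)).hasFDerivAt.comp z L.hasFDerivAt).fderiv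
  have hDg : HasFDerivAt (fderiv ℝ g) (fderiv ℝ (fderiv ℝ g) (L x)) (L x) :=
    ((hg.fderiv_right (m := 1) le_rfl).differentiableAt (by simp)).hasFDerivAt
  have hsecond := (hDg.comp x L.hasFDerivAt).clm_comp (hasFDerivAt_const L x)
  have happly : ∀ k l, fderiv ℝ (fderiv ℝ (g ∘ L)) x k l =
      fderiv ℝ (fderiv ℝ g) (L x) (L k) (L l) := fun k l => by
    rw [hfirst.fderiv_eq]
    exact (DFunLike.congr_fun (DFunLike.congr_fun hsecond.fderiv k) l).trans (by simp)
  refine ContinuousLinearMap.opNorm_le_bound₂ _ (by positivity) fun k l => ?_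
  calc ‖fderiv ℝ (fderiv ℝ (g ∘ L)) x k l‖
      ≤ ‖fderiv ℝ (fderiv ℝ g) (L x)‖ * ‖L k‖ * ‖L l‖ := by
        rw [happly]; exact ContinuousLinearMap.le_opNorm₂ _ _ _
    _ ≤ ‖fderiv ℝ (fderiv ℝ g) (L x)‖ * (‖L‖ * ‖k‖) * (‖L‖ * ‖l‖) := by
        gcongr <;> exact L.le_opNorm _
    _ = ‖fderiv ℝ (fderiv ℝ g) (L x)‖ * ‖L‖ ^ 2 * ‖k‖ * ‖l‖ := by ring

theorem IsLevelSetAt.mono {N : ℝ} {q : W} {Φ : W → ℝ} (hΦ : IsLevelSetAt S M q Φ) (hMN : M ≤ N) :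
    IsLevelSetAt S N q Φ where
  __ := hΦ
  norm_fderiv_fderiv_le := hΦ.norm_fderiv_fderiv_le.trans <|
    mul_le_mul_of_nonneg_right hMN (norm_nonneg _)

theorem IsLevelSetAt.comp_continuousLinearEquiv {p : V} {Φ : W → ℝ} (T : V ≃L[ℝ] W)
    (hΦ : IsLevelSetAt S M (T p) Φ) :
    IsLevelSetAt (T ⁻¹' S) (M * ‖(T : V →L[ℝ] W)‖ ^ 2 * ‖(T.symm : W →L[ℝ] V)‖) p (Φ ∘ T) := by
  have hD : fderiv ℝ Φ (T p) = (fderiv ℝ (Φ ∘ T) p).comp (T.symm : W →L[ℝ] V) := by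
    rw [T.comp_right_fderiv]
    ext w
    simp
  have hDle : ‖fderiv ℝ Φ (T p)‖ ≤ ‖(T.symm : W →L[ℝ] V)‖ * ‖fderiv ℝ (Φ ∘ T) p‖ := by
    rw [hD, mul_comm]
    exact ContinuousLinearMap.opNorm_comp_le _ _
  refine ⟨hΦ.contDiffAt.comp p T.contDiff.contDiffAt, fun h => hΦ.fderiv_ne_zero ?_, ?_,
    T.continuous.continuousAt.eventually hΦ.eventually_mem_iff⟩
  · rw [hD, h, ContinuousLinearMap.zero_comp]
  · calc ‖fderiv ℝ (fderiv ℝ (Φ ∘ T)) p‖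
        ≤ ‖fderiv ℝ (fderiv ℝ Φ) (T p)‖ * ‖(T : V →L[ℝ] W)‖ ^ 2 :=
          norm_fderiv_fderiv_comp_continuousLinearMap_le (T : V →L[ℝ] W) hΦ.contDiffAt
      _ ≤ M * (‖(T.symm : W →L[ℝ] V)‖ * ‖fderiv ℝ (Φ ∘ T) p‖) * ‖(T : V →L[ℝ] W)‖ ^ 2 := by
          gcongr
          exact hΦ.norm_fderiv_fderiv_le.trans (mul_le_mul_of_nonneg_left hDle hΦ.nonneg)
      _ = _ := by ring

theorem isLevelSetAt_of_eventually_mem_iff_eq {q : W} {ℓ : W →L[ℝ] ℝ} {P : W →L[ℝ] E} {f : E → ℝ}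
    (hf : ContDiffAt ℝ 2 f 0) (hDf : fderiv ℝ f 0 = 0) (hℓ : 1 ≤ ‖ℓ‖) (hP : ‖P‖ ≤ 1)
    (hS : ∀ᶠ z in 𝓝 q, z ∈ S ↔ ℓ (z - q) = f (P (z - q))) :
    IsLevelSetAt S ‖fderiv ℝ (fderiv ℝ f) 0‖ q (fun z => ℓ (z - q) - f (P (z - q))) := by
  have hfP : ContDiffAt ℝ 2 f (P 0) := by rwa [map_zero]
  have hcomp : ContDiffAt ℝ 2 (f ∘ P) 0 := hfP.comp 0 P.contDiff.contDiffAt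
  have hfirst : fderiv ℝ (fun z => ℓ z - f (P z)) =ᶠ[𝓝 0] fun z => ℓ - fderiv ℝ (f ∘ P) z := by
    filter_upwards [hcomp.eventually (by simp)] with z hz
    exact (ℓ.hasFDerivAt.sub (hz.differentiableAt (by simp)).hasFDerivAt).fderiv
  have hDcomp : fderiv ℝ (f ∘ P) 0 = 0 := by
    rw [((hfP.differentiableAt (by simp)).hasFDerivAt.comp 0 P.hasFDerivAt).fderiv, map_zero, hDf,
      ContinuousLinearMap.zero_comp]
  have hD : fderiv ℝ (fun z => ℓ (z - q) - f (P (z - q))) =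
      fun z => fderiv ℝ (fun z => ℓ z - f (P z)) (z - q) :=
    funext fun z => fderiv_comp_sub (f := fun z => ℓ z - f (P z)) q
  have hDq : fderiv ℝ (fun z => ℓ (z - q) - f (P (z - q))) q = ℓ := by
    simp only [hD, sub_self, hfirst.self_of_nhds, hDcomp, sub_zero]
  refine ⟨?_, ?_, ?_, hS.mono fun z hz => hz.trans sub_eq_zero.symm⟩
  · have hsub : ContDiffAt ℝ 2 (fun z => ℓ z - f (P z)) (q - q) := by
      rw [sub_self]
      exact ℓ.contDiff.contDiffAt.sub hcomp
    exact hsub.comp q (f := fun z => z - q) (contDiffAt_id.sub contDiffAt_const)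
  · rw [hDq]
    exact norm_pos_iff.1 (zero_lt_one.trans_le hℓ)
  · rw [hDq, hD, fderiv_comp_sub (f := fderiv ℝ fun z => ℓ z - f (P z)), sub_self,
      hfirst.fderiv_eq, fderiv_const_sub]
    refine (norm_neg (fderiv ℝ (fderiv ℝ (f ∘ P)) 0)).trans_le ?_
    calc ‖fderiv ℝ (fderiv ℝ (f ∘ P)) 0‖
        ≤ ‖fderiv ℝ (fderiv ℝ f) (P 0)‖ * ‖P‖ ^ 2 :=
          norm_fderiv_fderiv_comp_continuousLinearMap_le P hfP
      _ ≤ ‖fderiv ℝ (fderiv ℝ f) 0‖ * 1 := by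
          rw [map_zero]
          gcongr
          exact pow_le_one₀ (norm_nonneg _) hP
      _ ≤ _ := by gcongr

end Precomposition

section Coordinates

variable {n : ℕ}

theorem snocE_castSucc (y : EuclideanSpace ℝ (Fin n)) (a : ℝ) (i : Fin n) :
    snocE y a i.castSucc = y i := by
  simp [snocE]

theorem snocE_last (y : EuclideanSpace ℝ (Fin n)) (a : ℝ) : snocE y a (Fin.last n) = a := by
  simp [snocE]

theorem projE_apply (z : EuclideanSpace ℝ (Fin (n + 1))) (i : Fin n) :
    projE z i = z i.castSucc := rfl

theorem projE_snocE (y : EuclideanSpace ℝ (Fin n)) (a : ℝ) : projE (snocE y a) = y := by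
  ext i
  rw [projE_apply, snocE_castSucc]

theorem snocE_projE (z : EuclideanSpace ℝ (Fin (n + 1))) :
    snocE (projE z) (z (Fin.last n)) = z := by
  ext i
  induction i using Fin.lastCases with
  | last => rw [snocE_last]
  | cast i => rw [snocE_castSucc, projE_apply]

theorem norm_snocE_sq (y : EuclideanSpace ℝ (Fin n)) (a : ℝ) :
    ‖snocE y a‖ ^ 2 = ‖y‖ ^ 2 + a ^ 2 := by
  simp only [EuclideanSpace.real_norm_sq_eq, Fin.sum_univ_castSucc, snocE_castSucc, snocE_last]

/-- The decomposition of `ℝ^{n+1}` into its first `n` coordinates and the last one. The product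
`ℝⁿ × ℝ` carries the sup norm, so this is not an isometry. -/
noncomputable def snocEquiv (n : ℕ) :
    (EuclideanSpace ℝ (Fin n) × ℝ) ≃L[ℝ] EuclideanSpace ℝ (Fin (n + 1)) :=
  LinearEquiv.toContinuousLinearEquiv
    { toFun := fun p => snocE p.1 p.2
      invFun := fun z => (projE z, z (Fin.last n))
      left_inv := fun p => Prod.ext (projE_snocE p.1 p.2) (snocE_last p.1 p.2)
      right_inv := snocE_projE
      map_add' := fun p q => by
        ext i
        induction i using Fin.lastCases <;> simp [snocE_castSucc, snocE_last]
      map_smul' := fun c p => by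
        ext i
        induction i using Fin.lastCases <;> simp [snocE_castSucc, snocE_last] }

theorem snocEquiv_apply (p : EuclideanSpace ℝ (Fin n) × ℝ) : snocEquiv n p = snocE p.1 p.2 := rfl

theorem snocEquiv_symm_apply (z : EuclideanSpace ℝ (Fin (n + 1))) :
    (snocEquiv n).symm z = (projE z, z (Fin.last n)) := rfl

theorem norm_snocEquiv_le :
    ‖(snocEquiv n : EuclideanSpace ℝ (Fin n) × ℝ →L[ℝ] EuclideanSpace ℝ (Fin (n + 1)))‖ ≤ √2 := by
  refine ContinuousLinearMap.opNorm_le_bound _ (by positivity) fun p => ?_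
  have hfst : ‖p.1‖ ^ 2 ≤ ‖p‖ ^ 2 := by gcongr; exact norm_fst_le p
  have hsnd : p.2 ^ 2 ≤ ‖p‖ ^ 2 := by
    rw [← sq_abs, ← Real.norm_eq_abs]; gcongr; exact norm_snd_le p
  refine le_of_sq_le_sq ?_ (by positivity)
  rw [mul_pow, Real.sq_sqrt zero_le_two, ContinuousLinearEquiv.coe_coe, snocEquiv_apply,
    norm_snocE_sq]
  linarith

theorem norm_snocEquiv_symm_le :
    ‖((snocEquiv n).symm :
      EuclideanSpace ℝ (Fin (n + 1)) →L[ℝ] EuclideanSpace ℝ (Fin n) × ℝ)‖ ≤ 1 := by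
  refine ContinuousLinearMap.opNorm_le_bound _ zero_le_one fun z => ?_
  have hz : ‖z‖ ^ 2 = ‖projE z‖ ^ 2 + z (Fin.last n) ^ 2 := by rw [← norm_snocE_sq, snocE_projE]
  rw [one_mul, ContinuousLinearEquiv.coe_coe, snocEquiv_symm_apply]
  exact max_le (le_of_sq_le_sq (by nlinarith) (norm_nonneg z))
    (abs_le_of_sq_le_sq (by nlinarith) (norm_nonneg z))

theorem norm_projE_le (z : EuclideanSpace ℝ (Fin (n + 1))) : ‖projE z‖ ≤ ‖z‖ :=
  (norm_fst_le ((snocEquiv n).symm z)).trans <| by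
    simpa using (snocEquiv n).symm.toContinuousLinearMap.le_of_opNorm_le norm_snocEquiv_symm_le z

end Coordinates

section GraphCharts

variable {n : ℕ} {S : Set (EuclideanSpace ℝ (Fin (n + 1)))} {q : EuclideanSpace ℝ (Fin (n + 1))}
  {e : EuclideanSpace ℝ (Fin (n + 1)) ≃ₗᵢ[ℝ] EuclideanSpace ℝ (Fin (n + 1))} {r : ℝ}
  {f : EuclideanSpace ℝ (Fin n) → ℝ}

theorem IsGraphChartAt.mem_iff (h : IsGraphChartAt n S q e r f)
    {z : EuclideanSpace ℝ (Fin (n + 1))} (hz : z ∈ ball q r) :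
    z ∈ S ↔ e.symm (z - q) (Fin.last n) = f (projE (e.symm (z - q))) := by
  obtain ⟨-, -, -, -, hS⟩ := h
  have hzS : z ∈ S ↔ ∃ y ∈ ball (0 : EuclideanSpace ℝ (Fin n)) r, z = q + e (snocE y (f y)) := by
    simpa only [mem_inter_iff, mem_ofPred_eq, hz, and_true, true_and] using Set.ext_iff.1 hS z
  have hw : ∀ w, z = q + e w ↔ e.symm (z - q) = w := fun w => by
    rw [← sub_eq_iff_eq_add', e.symm_apply_eq]
  simp only [hzS, hw]
  constructor
  · rintro ⟨y, -, hy⟩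
    rw [hy, snocE_last, projE_snocE]
  · intro hlast
    refine ⟨projE (e.symm (z - q)), ?_, by rw [← hlast, snocE_projE]⟩
    rw [mem_ball_zero_iff]
    calc ‖projE (e.symm (z - q))‖ ≤ ‖e.symm (z - q)‖ := norm_projE_le _
      _ = dist z q := by rw [e.symm.norm_map, dist_eq_norm]
      _ < r := hz

theorem IsGraphChartAt.contDiffAt (h : IsGraphChartAt n S q e r f) : ContDiffAt ℝ 2 f 0 :=
  h.2.2.2.1.contDiffAt (ball_mem_nhds 0 h.1)

theorem IsGraphChartAt.exists_isLevelSetAt (h : IsGraphChartAt n S q e r f) :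
    ∃ Φ, IsLevelSetAt S ‖fderiv ℝ (fderiv ℝ f) 0‖ q Φ := by
  set T : EuclideanSpace ℝ (Fin (n + 1)) →L[ℝ] EuclideanSpace ℝ (Fin n) × ℝ :=
    (e.symm.toContinuousLinearEquiv.trans (snocEquiv n).symm).toContinuousLinearMap
  have hTapply : ∀ z, T z = (projE (e.symm z), e.symm z (Fin.last n)) := fun _ => rfl
  set P := (ContinuousLinearMap.fst ℝ (EuclideanSpace ℝ (Fin n)) ℝ).comp T
  set ℓ := (ContinuousLinearMap.snd ℝ (EuclideanSpace ℝ (Fin n)) ℝ).comp T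
  have hℓ : 1 ≤ ‖ℓ‖ := by
    have hnorm : ‖e (snocE 0 1)‖ = 1 := by
      rw [e.norm_map, ← sq_eq_sq₀ (norm_nonneg _) zero_le_one, norm_snocE_sq]
      simp
    simpa [ℓ, hTapply, snocE_last, hnorm] using ℓ.le_opNorm (e (snocE 0 1))
  have hP : ‖P‖ ≤ 1 := P.opNorm_le_bound zero_le_one fun z => by
    simpa [P, hTapply] using norm_projE_le (e.symm z)
  refine ⟨_, isLevelSetAt_of_eventually_mem_iff_eq (ℓ := ℓ) (P := P) h.contDiffAt h.2.2.1 hℓ hP ?_⟩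
  filter_upwards [ball_mem_nhds q h.1] with z hz using h.mem_iff hz

theorem IsGraphChartAt.isLocalGraphAt (h : IsGraphChartAt n S 0 (.refl ℝ _) r f) :
    IsLocalGraphAt (snocEquiv n ⁻¹' S) f (0, 0) where
  contDiffAt := h.contDiffAt
  apply_eq := h.2.1
  eventually_mem_iff := by
    have hball : ∀ᶠ p in 𝓝 ((0 : EuclideanSpace ℝ (Fin n)), (0 : ℝ)), snocEquiv n p ∈ ball 0 r := by
      refine (snocEquiv n).continuous.continuousAt.eventually_mem (isOpen_ball.mem_nhds ?_)
      rw [Prod.mk_zero_zero, map_zero]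
      exact mem_ball_self h.1
    filter_upwards [hball] with p hp
    have hmem : snocEquiv n p ∈ S ↔
        (snocEquiv n p - 0) (Fin.last n) = f (projE (snocEquiv n p - 0)) := h.mem_iff hp
    rwa [sub_zero, snocEquiv_apply, snocE_last, projE_snocE] at hmem

theorem IsGraphChartAt.exists_isLevelSetAt_snocEquiv_preimage {κ : ℝ}
    {p : EuclideanSpace ℝ (Fin n) × ℝ} (h : IsGraphChartAt n S (snocEquiv n p) e r f)
    (hf : ‖fderiv ℝ (fderiv ℝ f) 0‖ ≤ κ) :
    ∃ Φ, IsLevelSetAt (snocEquiv n ⁻¹' S) (2 * κ) p Φ := by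
  obtain ⟨Φ, hΦ⟩ := h.exists_isLevelSetAt
  have hκ : 0 ≤ κ := hΦ.nonneg.trans hf
  have hT := pow_le_pow_left₀ (norm_nonneg _) (norm_snocEquiv_le (n := n)) 2
  rw [Real.sq_sqrt zero_le_two] at hT
  refine ⟨_, (hΦ.comp_continuousLinearEquiv (snocEquiv n)).mono ?_⟩
  calc _ ≤ κ * 2 * 1 := by gcongr; exact norm_snocEquiv_symm_le
    _ = 2 * κ := by ring

theorem mapsTo_snocEquiv_ball : MapsTo (snocEquiv n) (ball 0 (r / 2)) (ball 0 r) := fun p hp => by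
  have hsqrt : √2 ≤ 2 := Real.sqrt_le_iff.2 (by norm_num)
  rw [mem_ball_zero_iff] at hp ⊢
  calc ‖snocEquiv n p‖ ≤ √2 * ‖p‖ :=
        (snocEquiv n).toContinuousLinearMap.le_of_opNorm_le norm_snocEquiv_le p
    _ ≤ 2 * ‖p‖ := by gcongr
    _ < r := by linarith

theorem IsGentleGraphOn.connectedComponentIn_eq_image_snocE {u : EuclideanSpace ℝ (Fin n) → ℝ}
    (hu : IsGentleGraphOn (snocEquiv n ⁻¹' S) u (ball 0 r)) (hr : 0 < r) (hu₀ : u 0 = 0) :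
    connectedComponentIn (S ∩ {z | ‖projE z‖ < r}) 0 = (fun y => snocE y (u y)) '' ball 0 r := by
  set T := snocEquiv n
  have hgraph : connectedComponentIn (T ⁻¹' S ∩ Prod.fst ⁻¹' ball 0 r) (0, u 0) =
      (fun y => (y, u y)) '' ball 0 r :=
    connectedComponentIn_eq_image_graph (convex_ball 0 r).isPreconnected (mem_ball_self hr)
      (fun y hy => (hu y hy).1.contDiffAt.continuousAt.continuousWithinAt)
      fun y hy => (hu y hy).1.eventually_mem_iff
  have hT₀ : T (0, u 0) = 0 := by rw [hu₀, Prod.mk_zero_zero, map_zero]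
  have hcyl : T '' (T ⁻¹' S ∩ Prod.fst ⁻¹' ball 0 r) = S ∩ {z | ‖projE z‖ < r} := by
    rw [image_preimage_inter, T.image_eq_preimage_symm]
    congr 1
    ext z
    simp [T, snocEquiv_symm_apply]
  have hmem : (0, u 0) ∈ T ⁻¹' S ∩ Prod.fst ⁻¹' ball 0 r :=
    ⟨(hu 0 (mem_ball_self hr)).1.mem, mem_ball_self hr⟩
  have himage := T.toHomeomorph.image_connectedComponentIn hmem
  simp only [ContinuousLinearEquiv.coe_toHomeomorph, hcyl, hT₀, hgraph, image_image] at himage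
  exact himage.symm

end GraphCharts

-- The sup norm on `ℝⁿ × ℝ` costs a factor two: the curvature bound becomes `M = 2 / r₀`, and
-- `2 * M * ρ ≤ 1` asks for `ρ ≤ r₀ / 4`.
theorem stmt_19_general (n : ℕ) (r₀ ρ : ℝ) (hρ : 0 < ρ) (hρr₀ : ρ ≤ r₀ / 4)
    (S : Set (EuclideanSpace ℝ (Fin (n + 1))))
    (hproper : closure S ∩ ball (0 : EuclideanSpace ℝ (Fin (n + 1))) r₀ ⊆ S)
    (hsurf : ∀ q ∈ S ∩ ball (0 : EuclideanSpace ℝ (Fin (n + 1))) r₀,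
      ∃ e r f, IsGraphChartAt n S q e r f ∧ ‖fderiv ℝ (fderiv ℝ f) 0‖ ≤ 1 / r₀)
    (htangent : ∃ r f, IsGraphChartAt n S 0
      (LinearIsometryEquiv.refl ℝ (EuclideanSpace ℝ (Fin (n + 1)))) r f) :
    ∃ u : EuclideanSpace ℝ (Fin n) → ℝ,
      u 0 = 0 ∧ fderiv ℝ u 0 = 0 ∧
      (∀ y : EuclideanSpace ℝ (Fin n), ‖y‖ < ρ → ‖fderiv ℝ u y‖ ≤ 4 * ‖y‖ / r₀) ∧
      connectedComponentIn (S ∩ {z | ‖projE z‖ < ρ}) 0 =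
        (fun y => snocE y (u y)) '' ball (0 : EuclideanSpace ℝ (Fin n)) ρ := by
  have hr₀ : 0 < r₀ := by linarith
  set T := snocEquiv n
  have hT : MapsTo T (ball 0 (r₀ / 2)) (ball 0 r₀) := mapsTo_snocEquiv_ball
  have hlevel : ∀ p ∈ T ⁻¹' S ∩ ball 0 (r₀ / 2),
      ∃ Φ, IsLevelSetAt (T ⁻¹' S) (2 * (1 / r₀)) p Φ := by
    rintro p ⟨hpS, hp⟩
    obtain ⟨e, r, f, h, hf⟩ := hsurf (T p) ⟨hpS, hT hp⟩
    exact h.exists_isLevelSetAt_snocEquiv_preimage hf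
  have hclosed : closure (T ⁻¹' S) ∩ ball 0 (r₀ / 2) ⊆ T ⁻¹' S := fun p ⟨hpS, hp⟩ =>
    hproper ⟨map_mem_closure T.continuous hpS fun _ => id, hT hp⟩
  obtain ⟨r, f, h⟩ := htangent
  obtain ⟨u, hu₀, hDu₀, hu, hDu⟩ := exists_isGentleGraphOn_of_isLevelSetAt hlevel hclosed
    h.isLocalGraphAt h.2.2.1 hρ (by linarith) (by field_simp; linarith)
  refine ⟨u, hu₀, hDu₀, fun y hy => ?_, ?_⟩
  · exact (hDu y (mem_ball_zero_iff.2 hy)).trans_eq (by ring)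
  · exact hu.connectedComponentIn_eq_image_snocE hρ hu₀

end LocalGraphLemma

/-- Chen–Yin local graph lemma: a hypersurface `S` properly embedded in `B_{r₀}(0)`,
containing `0`, with tangent plane `{x^{n+1} = 0}` at `0` and `|A| ≤ 1/r₀`, is, over the
cylinder of radius `r₀/96`, the graph of a function `u` with `u(0) = 0`, `∇u(0) = 0`, and
`|∇u(x')| ≤ 36|x'|/r₀`. -/
theorem stmt_19 (n : ℕ) (r₀ : ℝ) (hr₀ : 0 < r₀)
    (S : Set (EuclideanSpace ℝ (Fin (n + 1))))
    (h0S : (0 : EuclideanSpace ℝ (Fin (n + 1))) ∈ S)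
    (hproper : closure S ∩ ball (0 : EuclideanSpace ℝ (Fin (n + 1))) r₀ ⊆ S)
    (hsurf : ∀ q ∈ S ∩ ball (0 : EuclideanSpace ℝ (Fin (n + 1))) r₀,
      ∃ e r f, IsGraphChartAt n S q e r f)
    (hSFF : ∀ q ∈ S ∩ ball (0 : EuclideanSpace ℝ (Fin (n + 1))) r₀,
      ∀ e r f, IsGraphChartAt n S q e r f → ‖fderiv ℝ (fderiv ℝ f) 0‖ ≤ 1 / r₀)
    (htangent : ∃ r f, IsGraphChartAt n S 0
      (LinearIsometryEquiv.refl ℝ (EuclideanSpace ℝ (Fin (n + 1)))) r f) :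
    ∃ u : EuclideanSpace ℝ (Fin n) → ℝ,
      u 0 = 0 ∧ fderiv ℝ u 0 = 0 ∧
      (∀ y : EuclideanSpace ℝ (Fin n), ‖y‖ < r₀ / 96 → ‖fderiv ℝ u y‖ ≤ 36 * ‖y‖ / r₀) ∧
      connectedComponentIn (S ∩ {z | ‖projE z‖ < r₀ / 96}) 0 =
        (fun y => snocE y (u y)) '' ball (0 : EuclideanSpace ℝ (Fin n)) (r₀ / 96) := by
  have hcharts : ∀ q ∈ S ∩ ball 0 r₀, ∃ e r f,
      IsGraphChartAt n S q e r f ∧ ‖fderiv ℝ (fderiv ℝ f) 0‖ ≤ 1 / r₀ := fun q hq =>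
    let ⟨e, r, f, h⟩ := hsurf q hq
    ⟨e, r, f, h, hSFF q hq e r f h⟩
  obtain ⟨u, hu₀, hDu₀, hDu, hgraph⟩ := stmt_19_general n r₀ (r₀ / 96) (by positivity)
    (by linarith) S hproper hcharts htangent
  refine ⟨u, hu₀, hDu₀, fun y hy => (hDu y hy).trans ?_, hgraph⟩
  gcongr
  norm_num
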